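/- Let μ be the standard Gaussian measure on ℝⁿ, let Ω = {x ∈ ℝⁿ : g_j(x) ≥ 0, j = 1,…,m} be a basic closed semi-algebraic set, and let f ∈ ℝ[x] vanish on the boundary ∂Ω. For i ∈ {1,…,n} and α ∈ ℕⁿ, set p_{i,α}(x) = ∂(x^α f(x))/∂x_i − x_i · x^α f(x), and for M > 0 put Ω_M = Ω ∩ {x : ‖x‖ ≤ M}. Then there exists a constant C > 0, depending only on n, f and α (one may take C = 2 π^{(n+1)/2} ‖f‖₁ / Γ((n+1)/2), where ‖f‖₁ is the sum of the absolute values of the coefficients of f), such that |∫_{Ω_M} p_{i,α} dμ| ≤ C · M^{|α| + n + deg f} · exp(−M²/2) for all M ≥ 1. In particular, ∫_{Ω_M} p_{i,α} dμ → 0 as M → ∞. -/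

import Mathlib

open MeasureTheory MvPolynomial Filter Topology

noncomputable def gaussianMeasure (n : ℕ) : Measure (Fin n → ℝ) :=
  volume.withDensity fun x =>
    ENNReal.ofReal ((2 * Real.pi) ^ (-(n : ℝ) / 2) * Real.exp (-(∑ i, x i ^ 2) / 2))

noncomputable def expMeasure (n : ℕ) : Measure (Fin n → ℝ) :=
  (volume.restrict {x : Fin n → ℝ | ∀ i, 0 ≤ x i}).withDensity fun x =>
    ENNReal.ofReal (Real.exp (-(∑ i, x i)))

/-- degree |α| of a multi-index -/
def fdeg {n : ℕ} (α : Fin n →₀ ℕ) : ℕ := α.sum fun _ e => e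

/-- Riesz functional `L_u(p)` of a (pseudo-)moment sequence `u`. -/
noncomputable def riesz {n : ℕ} (u : (Fin n →₀ ℕ) → ℝ) (p : MvPolynomial (Fin n) ℝ) : ℝ :=
  ∑ α ∈ p.support, p.coeff α * u α

/-- Positive semidefiniteness of the moment matrix `M_d(u)`, expressed via its
quadratic form: `L_u(p²) ≥ 0` for all polynomials of degree at most `d`. -/
def MomPSD {n : ℕ} (d : ℕ) (u : (Fin n →₀ ℕ) → ℝ) : Prop :=
  ∀ p : MvPolynomial (Fin n) ℝ, p.totalDegree ≤ d → 0 ≤ riesz u (p ^ 2)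

/-- Positive semidefiniteness of the localizing matrix `M_k(g u)`, expressed via its
quadratic form: `L_u(g·p²) ≥ 0` for all polynomials of degree at most `k`. -/
def LocPSD {n : ℕ} (k : ℕ) (g : MvPolynomial (Fin n) ℝ) (u : (Fin n →₀ ℕ) → ℝ) : Prop :=
  ∀ p : MvPolynomial (Fin n) ℝ, p.totalDegree ≤ k → 0 ≤ riesz u (g * p ^ 2)

/-- moments of the standard Gaussian measure -/
noncomputable def gmom (n : ℕ) (α : Fin n →₀ ℕ) : ℝ :=
  ∫ x, (∏ i, x i ^ α i) ∂gaussianMeasure n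

/-- `d_j = ⌈deg g / 2⌉` -/
def dHalf {n : ℕ} (g : MvPolynomial (Fin n) ℝ) : ℕ := (g.totalDegree + 1) / 2

/-- the basic closed semi-algebraic set determined by the polynomials `g_j` -/
def semialg {n m : ℕ} (g : Fin m → MvPolynomial (Fin n) ℝ) : Set (Fin n → ℝ) :=
  {x | ∀ j, 0 ≤ eval x (g j)}

/-- feasibility for the primal semidefinite relaxation of order `d` (Gaussian measure) -/
def Feasible {n m : ℕ} (g : Fin m → MvPolynomial (Fin n) ℝ) (d : ℕ)
    (u v : (Fin n →₀ ℕ) → ℝ) : Prop :=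
  (∀ α : Fin n →₀ ℕ, fdeg α ≤ 2 * d → u α + v α = gmom n α) ∧
  MomPSD d u ∧ MomPSD d v ∧ ∀ j, LocPSD (d - dHalf (g j)) (g j) u

/-- the value `ō_d(f)` of the primal semidefinite relaxation of order `d` -/
noncomputable def obar {n m : ℕ} (g : Fin m → MvPolynomial (Fin n) ℝ) (d : ℕ)
    (f : MvPolynomial (Fin n) ℝ) : ℝ :=
  sSup {r | ∃ u v, Feasible g d u v ∧ r = riesz u f}

/-- the Stokes polynomial `p_{i,α} = ∂(x^α f)/∂x_i − x_i · x^α f` (Gaussian case) -/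
noncomputable def pStokesG {n : ℕ} (f : MvPolynomial (Fin n) ℝ) (i : Fin n) (α : Fin n →₀ ℕ) :
    MvPolynomial (Fin n) ℝ :=
  pderiv i (monomial α 1 * f) - X i * (monomial α 1 * f)

/-- the Stokes polynomial `p_{i,α} = ∂(x^α f)/∂x_i − x^α f` (exponential case) -/
noncomputable def pStokesE {n : ℕ} (f : MvPolynomial (Fin n) ℝ) (i : Fin n) (α : Fin n →₀ ℕ) :
    MvPolynomial (Fin n) ℝ :=
  pderiv i (monomial α 1 * f) - monomial α 1 * f

/-- feasibility for the Stokes-augmented semidefinite relaxation of order `d` -/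
def FeasibleS {n m : ℕ} (g : Fin m → MvPolynomial (Fin n) ℝ) (f : MvPolynomial (Fin n) ℝ)
    (d : ℕ) (u v : (Fin n →₀ ℕ) → ℝ) : Prop :=
  Feasible g d u v ∧
  ∀ (i : Fin n) (α : Fin n →₀ ℕ), (pStokesG f i α).totalDegree ≤ 2 * d →
    riesz u (pStokesG f i α) = 0

/-- the value `ω̄_d` of the Stokes-augmented semidefinite relaxation of order `d` -/
noncomputable def omegabar {n m : ℕ} (g : Fin m → MvPolynomial (Fin n) ℝ)
    (f : MvPolynomial (Fin n) ℝ) (d : ℕ) : ℝ :=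
  sSup {r | ∃ u v, FeasibleS g f d u v ∧ r = u 0}

/-- `p ∈ Σ[x]_d`: `p` is a sum of squares of polynomials of degree at most `d` -/
def IsSOS {n : ℕ} (d : ℕ) (p : MvPolynomial (Fin n) ℝ) : Prop :=
  ∃ (k : ℕ) (q : Fin k → MvPolynomial (Fin n) ℝ),
    (∀ i, (q i).totalDegree ≤ d) ∧ p = ∑ i, q i ^ 2

/-- membership in the truncated quadratic module `Q_{2d}(Ω)` -/
def InQM {n m : ℕ} (g : Fin m → MvPolynomial (Fin n) ℝ) (d : ℕ)
    (p : MvPolynomial (Fin n) ℝ) : Prop :=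
  ∃ (σ₀ : MvPolynomial (Fin n) ℝ) (σ : Fin m → MvPolynomial (Fin n) ℝ),
    IsSOS d σ₀ ∧ (∀ j, IsSOS (d - dHalf (g j)) (σ j)) ∧ p = σ₀ + ∑ j, σ j * g j

/-!
Write `F = φ · x^α f`, where `φ` is the Gaussian density. Since `∂_i φ = -x_i φ`, the integrand of
`∫_{Ω_M} p_{i,α} dμ` is exactly `∂_i F`. By Fubini, integrate first along the lines parallel to the
`i`-th axis. On such a line `F · 1_Ω` is continuous because `F` vanishes on `∂Ω`, and it is
differentiable with derivative `∂_i F · 1_Ω` off a countable set: a point of `∂Ω` where `∂_i F ≠ 0`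
is an isolated zero of `F` on the line. So the fundamental theorem of calculus leaves only the two
endpoints of the chord cut out by the ball. They lie on the sphere of radius `M`, where
`φ = (2π)^{-n/2} e^{-M²/2}` and `x^α f` grows at most polynomially in `M`.
-/

section OneVariable

variable {E : Type*} [NormedAddCommGroup E] [NormedSpace ℝ E] {S : Set ℝ} {h h' : ℝ → E}

theorem countable_setOfPred_eq_and_deriv_ne_zero (hderiv : ∀ t, HasDerivAt h (h' t) t) (c : E) :
    {t | h t = c ∧ h' t ≠ 0}.Countable := by
  refine (countable_setOfPred_isolated_right_within (s := {t | h t = c})).mono ?_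
  rintro t ⟨htc, hne⟩
  have hright : ∀ᶠ z in 𝓝[>] t, h z ≠ c :=
    ((hderiv t).eventually_ne hne).filter_mono (nhdsWithin_mono _ fun _ hz => ne_of_gt hz)
  refine ⟨htc, ?_⟩
  rw [Set.inter_comm, nhdsWithin_inter', ← empty_mem_iff_bot, mem_inf_principal]
  filter_upwards [hright] with z hz hzc using hz hzc

theorem hasDerivAt_indicator_of_frontier {t : ℝ} (hderiv : HasDerivAt h (h' t) t)
    (hfr : t ∈ frontier S → h t = 0 ∧ h' t = 0) :
    HasDerivAt (S.indicator h) (S.indicator h' t) t := by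
  by_cases htfr : t ∈ frontier S
  · obtain ⟨hval, hslope⟩ := hfr htfr
    have hind : S.indicator h t = 0 := by simp [hval]
    have hind' : S.indicator h' t = 0 := by simp [hslope]
    rw [hslope, hasDerivAt_iff_isLittleO] at hderiv
    rw [hind', hasDerivAt_iff_isLittleO]
    refine (Asymptotics.isBigO_of_le _ fun z => ?_).trans_isLittleO hderiv
    simpa only [hind, hval, smul_zero, sub_zero] using norm_indicator_le_norm_self h z
  · rcases em (t ∈ S) with htS | htS
    · have hnhds : S ∈ 𝓝 t := by
        by_contra hn
        exact htfr ⟨subset_closure htS, fun hint => hn (mem_interior_iff_mem_nhds.1 hint)⟩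
      rw [Set.indicator_of_mem htS]
      refine hderiv.congr_of_eventuallyEq ?_
      filter_upwards [hnhds] with z hz using Set.indicator_of_mem hz h
    · have hnhds : (closure S)ᶜ ∈ 𝓝 t :=
        isClosed_closure.isOpen_compl.mem_nhds fun hcl =>
          htfr ⟨hcl, fun hint => htS (interior_subset hint)⟩
      rw [Set.indicator_of_notMem htS]
      refine (hasDerivAt_const t (0 : E)).congr_of_eventuallyEq ?_
      filter_upwards [hnhds] with z hz
      exact Set.indicator_of_notMem (fun hzS => hz (subset_closure hzS)) h

theorem intervalIntegral_indicator_eq_sub_of_hasDerivAt [CompleteSpace E] (hS : MeasurableSet S)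
    (hderiv : ∀ t, HasDerivAt h (h' t) t) (hfr : ∀ t ∈ frontier S, h t = 0) {a b : ℝ}
    (hint : IntervalIntegrable h' volume a b) :
    ∫ t in a..b, S.indicator h' t = S.indicator h b - S.indicator h a := by
  have hcont : Continuous h := continuous_iff_continuousAt.2 fun t => (hderiv t).continuousAt
  refine integral_eq_of_hasDerivAt_off_countable _ _
    (countable_setOfPred_eq_and_deriv_ne_zero hderiv 0)
    (continuous_indicator hfr hcont.continuousOn).continuousOn (fun t ht => ?_)
    ⟨hint.1.indicator hS, hint.2.indicator hS⟩
  refine hasDerivAt_indicator_of_frontier (hderiv t) fun htfr => ⟨hfr t htfr, ?_⟩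
  by_contra hne
  exact ht.2 ⟨hfr t htfr, hne⟩

end OneVariable

section EuclideanBall

/-- The closed Euclidean ball of radius `|M|` about the origin of `ℝ^ι`. It is written out because
the metric that `ι → ℝ` carries is that of the sup norm. -/
def euclideanClosedBall (ι : Type*) [Fintype ι] (M : ℝ) : Set (ι → ℝ) :=
  {x | ∑ j, x j ^ 2 ≤ M ^ 2}

variable {ι : Type*} [Fintype ι] {M : ℝ}

theorem abs_apply_le_of_mem_euclideanClosedBall (hM : 0 ≤ M) {x : ι → ℝ}
    (hx : x ∈ euclideanClosedBall ι M) (j : ι) : |x j| ≤ M := by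
  refine abs_le_of_sq_le_sq (le_trans ?_ hx) hM
  exact Finset.single_le_sum (f := fun j => x j ^ 2) (fun _ _ => sq_nonneg _) (Finset.mem_univ j)

theorem euclideanClosedBall_subset_Icc (hM : 0 ≤ M) :
    euclideanClosedBall ι M ⊆ Set.Icc (fun _ => -M) (fun _ => M) := fun _ hx =>
  ⟨fun j => (abs_le.1 (abs_apply_le_of_mem_euclideanClosedBall hM hx j)).1,
    fun j => (abs_le.1 (abs_apply_le_of_mem_euclideanClosedBall hM hx j)).2⟩

theorem isCompact_euclideanClosedBall (hM : 0 ≤ M) : IsCompact (euclideanClosedBall ι M) :=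
  isCompact_Icc.of_isClosed_subset (isClosed_le (by fun_prop) continuous_const)
    (euclideanClosedBall_subset_Icc hM)

theorem volume_real_euclideanClosedBall_le (hM : 0 ≤ M) :
    volume.real (euclideanClosedBall ι M) ≤ (2 * M) ^ Fintype.card ι :=
  calc volume.real (euclideanClosedBall ι M)
      ≤ volume.real (Set.Icc (fun _ : ι => -M) (fun _ => M)) :=
        measureReal_mono (euclideanClosedBall_subset_Icc hM) isCompact_Icc.measure_lt_top.ne
    _ = (2 * M) ^ Fintype.card ι := by
        rw [measureReal_def, Real.volume_Icc_pi_toReal fun _ => by linarith]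
        simp [two_mul]

end EuclideanBall

section Slicing

variable {E : Type*} [NormedAddCommGroup E] [NormedSpace ℝ E] {k : ℕ}
  {Ω : Set (Fin (k + 1) → ℝ)} {F F' : (Fin (k + 1) → ℝ) → E} {i : Fin (k + 1)} {M : ℝ}

theorem sum_sq_insertNth (i : Fin (k + 1)) (t : ℝ) (y : Fin k → ℝ) :
    ∑ j, (i.insertNth t y : Fin (k + 1) → ℝ) j ^ 2 = t ^ 2 + ∑ j, y j ^ 2 := by
  simp only [Fin.sum_univ_succAbove _ i, Fin.insertNth_apply_same, Fin.insertNth_apply_succAbove]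

theorem insertNth_mem_euclideanClosedBall_iff {y : Fin k → ℝ} (hy : y ∈ euclideanClosedBall _ M)
    {t : ℝ} :
    (i.insertNth t y : Fin (k + 1) → ℝ) ∈ euclideanClosedBall _ M ↔
      t ∈ Set.Icc (-√(M ^ 2 - ∑ j, y j ^ 2)) √(M ^ 2 - ∑ j, y j ^ 2) := by
  rw [Set.mem_Icc, ← abs_le, Real.le_sqrt (abs_nonneg t) (sub_nonneg.2 hy), sq_abs,
    le_sub_iff_add_le, ← sum_sq_insertNth i]
  rfl

theorem integral_indicator_inter_euclideanClosedBall_insertNth_of_notMem {y : Fin k → ℝ}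
    (hy : y ∉ euclideanClosedBall _ M) :
    ∫ t, (Ω ∩ euclideanClosedBall _ M).indicator F' (i.insertNth t y) = 0 := by
  refine integral_eq_zero_of_ae (Eventually.of_forall fun t => Set.indicator_of_notMem ?_ _)
  rintro ⟨-, hball⟩
  have hsum : t ^ 2 + ∑ j, y j ^ 2 ≤ M ^ 2 := (sum_sq_insertNth i t y).symm.trans_le hball
  exact hy ((le_add_of_nonneg_left (sq_nonneg t)).trans hsum)

theorem norm_integral_indicator_inter_euclideanClosedBall_insertNth_le [CompleteSpace E]
    (hΩ : MeasurableSet Ω)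
    (hderiv : ∀ x, HasDerivAt (fun t => F (Function.update x i t)) (F' x) (x i))
    (hF' : Continuous F') (hfr : ∀ x ∈ frontier Ω, F x = 0) {B : ℝ}
    (hB : ∀ x, ∑ j, x j ^ 2 = M ^ 2 → ‖F x‖ ≤ B) {y : Fin k → ℝ}
    (hy : y ∈ euclideanClosedBall _ M) :
    ‖∫ t, (Ω ∩ euclideanClosedBall _ M).indicator F' (i.insertNth t y)‖ ≤ 2 * B := by
  set line : ℝ → Fin (k + 1) → ℝ := fun t => i.insertNth t y
  set b := √(M ^ 2 - ∑ j, y j ^ 2)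
  have hline : Continuous line :=
    Continuous.finInsertNth (A := fun _ => ℝ) i continuous_id continuous_const
  have hline_deriv (t : ℝ) : HasDerivAt (F ∘ line) ((F' ∘ line) t) t := by
    simpa [line, Fin.update_insertNth] using! hderiv (line t)
  have hline_fr (t : ℝ) (ht : t ∈ frontier (line ⁻¹' Ω)) : (F ∘ line) t = 0 :=
    hfr _ (hline.frontier_preimage_subset _ ht)
  have hchord (t : ℝ) : (Ω ∩ euclideanClosedBall _ M).indicator F' (line t) =
      (Set.Icc (-b) b).indicator ((line ⁻¹' Ω).indicator (F' ∘ line)) t := by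
    classical
    rw [Set.indicator_indicator, Set.inter_comm (Set.Icc _ _), Set.indicator_apply,
      Set.indicator_apply]
    exact if_congr (and_congr_right fun _ => insertNth_mem_euclideanClosedBall_iff hy) rfl rfl
  have hendpoint (t : ℝ) (ht : t ^ 2 = b ^ 2) : ‖(line ⁻¹' Ω).indicator (F ∘ line) t‖ ≤ B := by
    refine (norm_indicator_le_norm_self _ _).trans (hB _ ?_)
    rw [sum_sq_insertNth, ht, Real.sq_sqrt (sub_nonneg.2 hy), sub_add_cancel]
  have hab : -b ≤ b := neg_le_self (Real.sqrt_nonneg _)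
  calc ‖∫ t, (Ω ∩ euclideanClosedBall _ M).indicator F' (line t)‖
      = ‖∫ t in -b..b, (line ⁻¹' Ω).indicator (F' ∘ line) t‖ := by
        simp_rw [hchord]
        rw [integral_indicator measurableSet_Icc, integral_Icc_eq_integral_Ioc,
          intervalIntegral.integral_of_le hab]
    _ = ‖(line ⁻¹' Ω).indicator (F ∘ line) b - (line ⁻¹' Ω).indicator (F ∘ line) (-b)‖ := by
        rw [intervalIntegral_indicator_eq_sub_of_hasDerivAt (hline.measurable hΩ) hline_deriv
          hline_fr ((hF'.comp hline).intervalIntegrable _ _)]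
    _ ≤ 2 * B := by
        rw [two_mul]
        exact (norm_sub_le _ _).trans (add_le_add (hendpoint b rfl) (hendpoint (-b) (neg_sq b)))

theorem integral_eq_integral_integral_insertNth (i : Fin (k + 1)) (hF : Integrable F) :
    ∫ x, F x = ∫ y : Fin k → ℝ, ∫ t : ℝ, F (i.insertNth t y) := by
  have hpres := (volume_preserving_piFinSuccAbove (fun _ : Fin (k + 1) => ℝ) i).symm
  rw [← hpres.integral_comp', Measure.volume_eq_prod, integral_prod_symm]
  · rfl
  · rw [← Measure.volume_eq_prod]
    exact (hpres.integrable_comp_emb (MeasurableEquiv.measurableEmbedding _)).2 hF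

theorem norm_setIntegral_inter_euclideanClosedBall_le [CompleteSpace E] (hΩ : MeasurableSet Ω)
    (hderiv : ∀ x, HasDerivAt (fun t => F (Function.update x i t)) (F' x) (x i))
    (hF' : Continuous F') (hfr : ∀ x ∈ frontier Ω, F x = 0) (hM : 0 ≤ M) {B : ℝ}
    (hB : ∀ x, ∑ j, x j ^ 2 = M ^ 2 → ‖F x‖ ≤ B) :
    ‖∫ x in Ω ∩ euclideanClosedBall _ M, F' x‖ ≤
      2 * B * volume.real (euclideanClosedBall (Fin k) M) := by
  have hmeas : MeasurableSet (Ω ∩ euclideanClosedBall _ M) :=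
    hΩ.inter (isCompact_euclideanClosedBall hM).isClosed.measurableSet
  have hint : Integrable ((Ω ∩ euclideanClosedBall _ M).indicator F') :=
    (integrable_indicator_iff hmeas).2 <|
      (hF'.continuousOn.integrableOn_compact (isCompact_euclideanClosedBall hM)).mono_set
        Set.inter_subset_right
  rw [← integral_indicator hmeas, integral_eq_integral_integral_insertNth i hint,
    ← setIntegral_eq_integral_of_forall_compl_eq_zero fun y hy =>
      integral_indicator_inter_euclideanClosedBall_insertNth_of_notMem hy]
  exact norm_setIntegral_le_of_norm_le_const (isCompact_euclideanClosedBall hM).measure_lt_top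
    fun y hy => norm_integral_indicator_inter_euclideanClosedBall_insertNth_le
      hΩ hderiv hF' hfr hB hy

end Slicing

section PolynomialEvaluation

variable {σ R : Type*}

/-- The norm `‖p‖₁`: the sum of the norms of the coefficients of `p`. -/
noncomputable def coeffNorm [NormedCommRing R] (p : MvPolynomial σ R) : ℝ :=
  ∑ d ∈ p.support, ‖p.coeff d‖

theorem coeffNorm_nonneg [NormedCommRing R] (p : MvPolynomial σ R) : 0 ≤ coeffNorm p :=
  Finset.sum_nonneg fun _ _ => norm_nonneg _

theorem norm_eval_le_coeffNorm_mul_pow [NormedCommRing R] [NormOneClass R] (p : MvPolynomial σ R)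
    {x : σ → R} {M : ℝ} (hM : 1 ≤ M) (hx : ∀ j, ‖x j‖ ≤ M) :
    ‖eval x p‖ ≤ coeffNorm p * M ^ p.totalDegree := by
  have hmonomial (d : σ →₀ ℕ) (hd : d ∈ p.support) :
      ‖∏ j ∈ d.support, x j ^ d j‖ ≤ M ^ p.totalDegree :=
    calc ‖∏ j ∈ d.support, x j ^ d j‖
        ≤ ∏ j ∈ d.support, ‖x j ^ d j‖ := Finset.norm_prod_le _ _
      _ ≤ ∏ j ∈ d.support, M ^ d j := by
          gcongr with j
          exact (norm_pow_le _ _).trans (by gcongr; exact hx j)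
      _ = M ^ d.sum fun _ e => e := Finset.prod_pow_eq_pow_sum _ _ _
      _ ≤ M ^ p.totalDegree := pow_le_pow_right₀ hM (le_totalDegree hd)
  rw [eval_eq, coeffNorm, Finset.sum_mul]
  refine norm_sum_le_of_le _ fun d hd => (norm_mul_le _ _).trans ?_
  exact mul_le_mul_of_nonneg_left (hmonomial d hd) (norm_nonneg _)

theorem hasDerivAt_eval_update [NontriviallyNormedField R] [DecidableEq σ] (x : σ → R) (i : σ)
    (p : MvPolynomial σ R) :
    HasDerivAt (fun t => eval (Function.update x i t) p) (eval x (pderiv i p)) (x i) := by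
  induction p using MvPolynomial.induction_on with
  | C a => simpa using hasDerivAt_const (x i) a
  | add p q hp hq => simpa using hp.fun_add hq
  | mul_X p j hp =>
    have hX : HasDerivAt (fun t => Function.update x i t j) (eval x (pderiv i (X j))) (x i) := by
      rcases eq_or_ne j i with rfl | hji
      · simpa using hasDerivAt_id' (x j)
      · simpa [pderiv_X_of_ne hji.symm, hji] using hasDerivAt_const (x i) (x j)
    simp only [map_mul, eval_X, Derivation.leibniz, smul_eq_mul, map_add]
    refine (hp.fun_mul hX).congr_deriv ?_
    rw [Function.update_eq_self]
    ring

end PolynomialEvaluation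

section Gaussian

variable {n : ℕ}

/-- The density of `gaussianMeasure n` with respect to Lebesgue measure. -/
noncomputable def gaussianDensity (x : Fin n → ℝ) : ℝ :=
  (2 * Real.pi) ^ (-(n : ℝ) / 2) * Real.exp (-(∑ i, x i ^ 2) / 2)

theorem gaussianDensity_nonneg (x : Fin n → ℝ) : 0 ≤ gaussianDensity x := by
  unfold gaussianDensity
  positivity

theorem continuous_gaussianDensity : Continuous (gaussianDensity (n := n)) := by
  unfold gaussianDensity
  fun_prop

theorem setIntegral_gaussianMeasure {A : Set (Fin n → ℝ)} (hA : MeasurableSet A)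
    (F : (Fin n → ℝ) → ℝ) :
    ∫ x in A, F x ∂gaussianMeasure n = ∫ x in A, gaussianDensity x * F x := by
  have hdensity : Measurable fun x : Fin n → ℝ => ENNReal.ofReal (gaussianDensity x) :=
    continuous_gaussianDensity.measurable.ennreal_ofReal
  refine (setIntegral_withDensity_eq_setIntegral_toReal_smul (μ := volume) hdensity
    (Eventually.of_forall fun _ => ENNReal.ofReal_lt_top) F hA).trans ?_
  simp only [ENNReal.toReal_ofReal (gaussianDensity_nonneg _), smul_eq_mul]

theorem hasDerivAt_gaussianDensity_update (x : Fin n → ℝ) (i : Fin n) :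
    HasDerivAt (fun t => gaussianDensity (Function.update x i t)) (-x i * gaussianDensity x)
      (x i) := by
  have hsq : HasDerivAt (fun t => ∑ j, Function.update x i t j ^ 2) (2 * x i) (x i) := by
    have hcoord := hasDerivAt_pi.1 (hasDerivAt_update x i (x i))
    refine (HasDerivAt.fun_sum fun j _ => (hcoord j).fun_pow 2).congr_deriv ?_
    simp [Pi.single_apply]
  refine ((hsq.fun_neg.div_const 2).exp.const_mul _).congr_deriv ?_
  rw [Function.update_eq_self, gaussianDensity]
  ring

theorem hasDerivAt_gaussianDensity_mul_eval_update (q : MvPolynomial (Fin n) ℝ) (x : Fin n → ℝ)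
    (i : Fin n) :
    HasDerivAt
      (fun t => gaussianDensity (Function.update x i t) * eval (Function.update x i t) q)
      (gaussianDensity x * eval x (pderiv i q - X i * q)) (x i) := by
  refine ((hasDerivAt_gaussianDensity_update x i).fun_mul
    (hasDerivAt_eval_update x i q)).congr_deriv ?_
  simp only [Function.update_eq_self, map_sub, map_mul, eval_X]
  ring

theorem norm_gaussianDensity_mul_eval_le_of_sum_sq_eq (q : MvPolynomial (Fin n) ℝ) {M : ℝ}
    (hM : 1 ≤ M) {x : Fin n → ℝ} (hx : ∑ j, x j ^ 2 = M ^ 2) :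
    ‖gaussianDensity x * eval x q‖ ≤
      (2 * Real.pi) ^ (-(n : ℝ) / 2) * Real.exp (-M ^ 2 / 2) *
        (coeffNorm q * M ^ q.totalDegree) := by
  rw [norm_mul, Real.norm_of_nonneg (gaussianDensity_nonneg x), gaussianDensity, hx]
  gcongr
  exact norm_eval_le_coeffNorm_mul_pow q hM
    (abs_apply_le_of_mem_euclideanClosedBall (zero_le_one.trans hM) hx.le)

theorem abs_setIntegral_pderiv_sub_X_mul_gaussianMeasure_le (q : MvPolynomial (Fin n) ℝ)
    {Ω : Set (Fin n → ℝ)} (hΩ : MeasurableSet Ω) (hfr : ∀ x ∈ frontier Ω, eval x q = 0)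
    (i : Fin n) {M : ℝ} (hM : 1 ≤ M) :
    |∫ x in Ω ∩ euclideanClosedBall _ M, eval x (pderiv i q - X i * q) ∂gaussianMeasure n| ≤
      2 ^ n * (2 * Real.pi) ^ (-(n : ℝ) / 2) * coeffNorm q * M ^ (n - 1 + q.totalDegree) *
        Real.exp (-M ^ 2 / 2) := by
  have hM₀ : 0 ≤ M := zero_le_one.trans hM
  have hcoeff := coeffNorm_nonneg q
  obtain _ | k := n
  · exact i.elim0
  rw [setIntegral_gaussianMeasure
    (hΩ.inter (isCompact_euclideanClosedBall hM₀).isClosed.measurableSet), ← Real.norm_eq_abs]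
  set B := (2 * Real.pi) ^ (-((k + 1 : ℕ) : ℝ) / 2) * Real.exp (-M ^ 2 / 2) *
    (coeffNorm q * M ^ q.totalDegree) with hB
  calc ‖∫ x in Ω ∩ euclideanClosedBall _ M, gaussianDensity x * eval x (pderiv i q - X i * q)‖
      ≤ 2 * B * volume.real (euclideanClosedBall (Fin k) M) :=
        norm_setIntegral_inter_euclideanClosedBall_le hΩ
          (fun x => hasDerivAt_gaussianDensity_mul_eval_update q x i)
          (continuous_gaussianDensity.mul (MvPolynomial.continuous_eval _))
          (fun x hx => by rw [hfr x hx, mul_zero]) hM₀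
          (fun _ hx => norm_gaussianDensity_mul_eval_le_of_sum_sq_eq q hM hx)
    _ ≤ 2 * B * (2 * M) ^ k := by
        gcongr
        simpa using volume_real_euclideanClosedBall_le (ι := Fin k) hM₀
    _ = _ := by
        rw [hB, Nat.add_sub_cancel]
        ring

end Gaussian

theorem tendsto_const_mul_pow_mul_exp_neg_sq_div_two (C : ℝ) (N : ℕ) :
    Tendsto (fun M : ℝ => C * M ^ N * Real.exp (-M ^ 2 / 2)) atTop (𝓝 0) := by
  have hexp : Tendsto (fun M : ℝ => Real.exp (-(1 / 2) * M)) atTop (𝓝 0) :=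
    Real.tendsto_exp_atBot.comp (tendsto_id.const_mul_atTop_of_neg (by norm_num))
  have hlim := ((rpow_mul_exp_neg_mul_sq_isLittleO_exp_neg (b := 1 / 2) (by norm_num)
    N).trans_tendsto hexp).const_mul C
  rw [mul_zero] at hlim
  refine hlim.congr fun M => ?_
  rw [Real.rpow_natCast, mul_assoc]
  ring_nf

theorem measurableSet_semialg {n m : ℕ} (g : Fin m → MvPolynomial (Fin n) ℝ) :
    MeasurableSet (semialg g) := by
  rw [semialg, Set.ofPred_forall]
  exact MeasurableSet.iInter fun j =>
    (isClosed_le continuous_const (MvPolynomial.continuous_eval _)).measurableSet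

theorem totalDegree_monomial_mul_le {R : Type*} [CommSemiring R] {n : ℕ} (α : Fin n →₀ ℕ) (c : R)
    (f : MvPolynomial (Fin n) R) :
    (monomial α c * f).totalDegree ≤ fdeg α + f.totalDegree :=
  (totalDegree_mul _ _).trans (Nat.add_le_add_right (totalDegree_monomial_le α c) _)

theorem stmt15_general {n : ℕ} (f : MvPolynomial (Fin n) ℝ) (α : Fin n →₀ ℕ) :
    ∃ C : ℝ, 0 < C ∧
      ∀ Ω : Set (Fin n → ℝ), MeasurableSet Ω →
        (∀ x ∈ frontier Ω, eval x f = 0) →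
        ∀ i : Fin n,
          (∀ M : ℝ, 1 ≤ M →
            |∫ x in Ω ∩ {x | ∑ j, x j ^ 2 ≤ M ^ 2}, eval x (pStokesG f i α) ∂gaussianMeasure n| ≤
              C * M ^ (fdeg α + n + f.totalDegree) * Real.exp (-M ^ 2 / 2)) ∧
          Tendsto (fun M : ℝ =>
              ∫ x in Ω ∩ {x | ∑ j, x j ^ 2 ≤ M ^ 2}, eval x (pStokesG f i α) ∂gaussianMeasure n)
            atTop (𝓝 0) := by
  set q : MvPolynomial (Fin n) ℝ := monomial α 1 * f with hq
  set C₀ := 2 ^ n * (2 * Real.pi) ^ (-(n : ℝ) / 2) * coeffNorm q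
  have hC₀ : 0 ≤ C₀ := mul_nonneg (by positivity) (coeffNorm_nonneg q)
  have hdeg : n - 1 + q.totalDegree ≤ fdeg α + n + f.totalDegree := by
    have hq_deg : q.totalDegree ≤ fdeg α + f.totalDegree := totalDegree_monomial_mul_le α 1 f
    omega
  refine ⟨C₀ + 1, by positivity, fun Ω hΩ hfr i => ?_⟩
  have hfr_q (x) (hx : x ∈ frontier Ω) : eval x q = 0 := by rw [hq, map_mul, hfr x hx, mul_zero]
  have hbound (M : ℝ) (hM : 1 ≤ M) :
      |∫ x in Ω ∩ euclideanClosedBall _ M, eval x (pStokesG f i α) ∂gaussianMeasure n| ≤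
        (C₀ + 1) * M ^ (fdeg α + n + f.totalDegree) * Real.exp (-M ^ 2 / 2) := by
    refine (abs_setIntegral_pderiv_sub_X_mul_gaussianMeasure_le q hΩ hfr_q i hM).trans ?_
    gcongr
    exact le_add_of_nonneg_right zero_le_one
  exact ⟨hbound, squeeze_zero_norm' ((eventually_ge_atTop 1).mono hbound)
    (tendsto_const_mul_pow_mul_exp_neg_sq_div_two _ _)⟩

/-- quantitative truncation bound. For the Gaussian measure and `Ω_M = Ω ∩
{‖x‖ ≤ M}`, there is a constant `C > 0` depending only on `n`, `f` and `α` such that,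
whenever `f` vanishes on `∂Ω` for a basic closed semi-algebraic set `Ω`,
`|∫_{Ω_M} p_{i,α} dμ| ≤ C·M^{|α|+n+deg f}·e^{−M²/2}` for all `M ≥ 1`; in particular
`∫_{Ω_M} p_{i,α} dμ → 0` as `M → ∞`. -/
theorem stmt15 {n : ℕ} (f : MvPolynomial (Fin n) ℝ) (α : Fin n →₀ ℕ) :
    ∃ C : ℝ, 0 < C ∧
      ∀ (m : ℕ) (g : Fin m → MvPolynomial (Fin n) ℝ),
        (∀ x ∈ frontier (semialg g), eval x f = 0) →
        ∀ i : Fin n,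
          (∀ M : ℝ, 1 ≤ M →
            |∫ x in semialg g ∩ {x | ∑ j, x j ^ 2 ≤ M ^ 2},
                eval x (pStokesG f i α) ∂gaussianMeasure n| ≤
              C * M ^ (fdeg α + n + f.totalDegree) * Real.exp (-M ^ 2 / 2)) ∧
          Tendsto (fun M : ℝ =>
              ∫ x in semialg g ∩ {x | ∑ j, x j ^ 2 ≤ M ^ 2},
                eval x (pStokesG f i α) ∂gaussianMeasure n)
            atTop (𝓝 0) := by
  obtain ⟨C, hC, hbound⟩ := stmt15_general f α
  exact ⟨C, hC, fun _ g => hbound _ (measurableSet_semialg g)⟩
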